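/- (Sequentialization) Let G be any bl-graph that is total with respect to a sharing-free named sequent ⊢Γ. Then there is a named GS4 derivation P with conclusion ⊢Γ such that ⟨⟨P⟩⟩ = G. -/

import Mathlib

open scoped Classical

noncomputable section

namespace GS4

/-- Named classical propositional formulas over atoms `α`, with names in `ℕ`. -/
inductive NForm (α : Type) : Type
  | atom : ℕ → α → NForm α
  | or   : NForm α → NForm α → NForm α
  | and  : NForm α → NForm α → NForm α

variable {α : Type}

/-- Name-preserving De Morgan negation, w.r.t. an involution `bar` on atoms. -/
def negF (bar : α → α) : NForm α → NForm α
  | .atom x a => .atom x (bar a)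
  | .or A B => .and (negF bar A) (negF bar B)
  | .and A B => .or (negF bar A) (negF bar B)

/-- The set of names occurring in a named formula. -/
def NForm.names : NForm α → Set ℕ
  | .atom x _ => {x}
  | .or A B => A.names ∪ B.names
  | .and A B => A.names ∪ B.names

/-- A named formula is sharing-free if every name occurs at most once in it. -/
def NForm.sharingFree : NForm α → Prop
  | .atom _ _ => True
  | .or A B => A.sharingFree ∧ B.sharingFree ∧ Disjoint A.names B.names
  | .and A B => A.sharingFree ∧ B.sharingFree ∧ Disjoint A.names B.names

def NForm.isAtom : NForm α → Prop
  | .atom _ _ => True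
  | _ => False

/-- Anonymous formulas (shapes): `A ≡ B` iff their shapes coincide. -/
inductive Shape (α : Type) : Type
  | atom : α → Shape α
  | or   : Shape α → Shape α → Shape α
  | and  : Shape α → Shape α → Shape α

def NForm.shape : NForm α → Shape α
  | .atom _ a => .atom a
  | .or A B => .or A.shape B.shape
  | .and A B => .and A.shape B.shape

/-- `HasAtom A x a`: the atomic formula `x:a` occurs in `A`. -/
def HasAtom : NForm α → ℕ → α → Prop
  | .atom y b, x, a => y = x ∧ b = a
  | .or A B, x, a => HasAtom A x a ∨ HasAtom B x a
  | .and A B, x, a => HasAtom A x a ∨ HasAtom B x a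

/-- Names of a finite set of named formulas. -/
def snames (Γ : Finset (NForm α)) : Set ℕ := ⋃ A ∈ Γ, A.names

/-- A finite set of named formulas is sharing-free if all its elements are
sharing-free with pairwise disjoint name sets. -/
def SFSet (Γ : Finset (NForm α)) : Prop :=
  (∀ A ∈ Γ, A.sharingFree) ∧
  ∀ A ∈ Γ, ∀ B ∈ Γ, A ≠ B → Disjoint A.names B.names

/-- `x:a` occurs in some formula of `Γ` (i.e. `Γ[x] = a` for sharing-free `Γ`). -/
def HasAtomS (Γ : Finset (NForm α)) (x : ℕ) (a : α) : Prop :=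
  ∃ A ∈ Γ, HasAtom A x a

/-- Branch sets of named formulas. -/
def BrF : NForm α → Set (Set ℕ)
  | .atom x _ => {{x}}
  | .or A B => {X | ∃ Y ∈ BrF A, ∃ Z ∈ BrF B, X = Y ∪ Z}
  | .and A B => BrF A ∪ BrF B

/-- Branch sets of sequents (finite sharing-free sets of named formulas). -/
def BrS (Γ : Finset (NForm α)) : Set (Set ℕ) :=
  {X | X ⊆ snames Γ ∧ ∀ A ∈ Γ, X ∩ A.names ∈ BrF A}

/-! ## Branch-labeled name graphs -/

/-- A branch-labeled name graph: vertices and a relation between unordered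
pairs of vertices and branch labels. -/
structure BLGraph : Type where
  verts : Set ℕ
  rel : Sym2 ℕ → Set ℕ → Prop

/-- Well-formedness of a bl-graph: related pairs consist of distinct vertices,
labels are sets of vertices, and each edge is included in its labels. -/
def BLGraph.IsBL (G : BLGraph) : Prop :=
  ∀ e X, G.rel e X → ¬ e.IsDiag ∧ X ⊆ G.verts ∧ ∀ v ∈ e, v ∈ X

def BLGraph.Edges (G : BLGraph) : Set (Sym2 ℕ) := {e | ∃ X, G.rel e X}

def BLGraph.Br (G : BLGraph) : Set (Set ℕ) := {X | ∃ e, G.rel e X}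

def BLGraph.union (G H : BLGraph) : BLGraph :=
  ⟨G.verts ∪ H.verts, fun e X => G.rel e X ∨ H.rel e X⟩

/-- Restriction `G↾_S` of a bl-graph. -/
def BLGraph.restrict (G : BLGraph) (S : Set ℕ) : BLGraph :=
  ⟨G.verts ∩ S, fun e X => G.rel e X ∧ X ⊆ S⟩

/-- The interface-relativized edge-branch relation `e ⊰^I_G X`. -/
def BLGraph.relI (G : BLGraph) (I : Set ℕ) (e : Sym2 ℕ) (X : Set ℕ) : Prop :=
  ∃ Y, G.rel e Y ∧ X = Y \ I

/-- `z 0, …, z (n-1)` is an `X`-labeled alternating path between `G` and `H`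
through the interface `I`. -/
def AltPath (G H : BLGraph) (I X : Set ℕ) (n : ℕ) (z : ℕ → ℕ) : Prop :=
  1 < n ∧
  (∀ i < n, ∀ j < n, z i = z j → i = j) ∧
  (∀ i, 0 < i → i + 1 < n → z i ∈ I) ∧
  ((∀ i, i + 1 < n →
      (Even i → G.relI I s(z i, z (i + 1)) X) ∧ (¬ Even i → H.relI I s(z i, z (i + 1)) X)) ∨
   (∀ i, i + 1 < n →
      (Even i → H.relI I s(z i, z (i + 1)) X) ∧ (¬ Even i → G.relI I s(z i, z (i + 1)) X)))

/-- Composition of bl-graphs over an interface `I`. -/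
def BLGraph.comp (G H : BLGraph) (I : Set ℕ) : BLGraph :=
  ⟨(G.verts ∪ H.verts) \ I,
   fun e X => ∃ n z, AltPath G H I X n z ∧ z 0 ∉ I ∧ z (n - 1) ∉ I ∧
     e = s(z 0, z (n - 1))⟩

/-- The weakening operator on bl-graphs: add vertices `V` and extend every
branch label by a member of `Brs`. -/
def blwk (V : Set ℕ) (Brs : Set (Set ℕ)) (G : BLGraph) : BLGraph :=
  ⟨G.verts ∪ V, fun e X => ∃ Y Z, G.rel e Y ∧ Z ∈ Brs ∧ X = Y ∪ Z⟩

/-- The bl-identity graph `id_{A,C}` on a pair of dual formulas. -/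
def blid : NForm α → NForm α → BLGraph
  | .atom x _, .atom y _ => ⟨{x, y}, fun e X => e = s(x, y) ∧ X = {x, y}⟩
  | .or A1 A2, .and C1 C2 =>
      (blwk A2.names (BrF A2) (blid A1 C1)).union (blwk A1.names (BrF A1) (blid A2 C2))
  | .and A1 A2, .or C1 C2 =>
      (blwk C2.names (BrF C2) (blid A1 C1)).union (blwk C1.names (BrF C1) (blid A2 C2))
  | _, _ => ⟨∅, fun _ _ => False⟩

/-! ## Simple name graphs -/

/-- A simple name graph. -/
structure NGraph : Type where
  verts : Set ℕ
  edges : Set (Sym2 ℕ)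

/-- Subgraph relation `H ⊑ G`. -/
def NGraph.Sub (H G : NGraph) : Prop := H.verts ⊆ G.verts ∧ H.edges ⊆ G.edges

def NGraph.union (G H : NGraph) : NGraph := ⟨G.verts ∪ H.verts, G.edges ∪ H.edges⟩

/-- Induced subgraph `G↾_S`. -/
def NGraph.restrict (G : NGraph) (S : Set ℕ) : NGraph :=
  ⟨G.verts ∩ S, {e ∈ G.edges | ∀ v ∈ e, v ∈ S}⟩

/-- Alternating paths between simple name graphs through an interface. -/
def NAltPath (G H : NGraph) (I : Set ℕ) (n : ℕ) (z : ℕ → ℕ) : Prop :=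
  0 < n ∧
  (∀ i < n, ∀ j < n, z i = z j → i = j) ∧
  (∀ i, 0 < i → i + 1 < n → z i ∈ I) ∧
  ((∀ i, i + 1 < n →
      (Even i → s(z i, z (i + 1)) ∈ G.edges) ∧ (¬ Even i → s(z i, z (i + 1)) ∈ H.edges)) ∨
   (∀ i, i + 1 < n →
      (Even i → s(z i, z (i + 1)) ∈ H.edges) ∧ (¬ Even i → s(z i, z (i + 1)) ∈ G.edges)))

/-- Composition of simple name graphs over an interface. -/
def NGraph.comp (G H : NGraph) (I : Set ℕ) : NGraph :=
  ⟨(G.verts ∪ H.verts) \ I,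
   {e | ∃ x y, x ≠ y ∧ x ∈ (G.verts ∪ H.verts) \ I ∧ y ∈ (G.verts ∪ H.verts) \ I ∧
        e = s(x, y) ∧ ∃ n z, NAltPath G H I n z ∧ z 0 = x ∧ z (n - 1) = y}⟩

/-- The identity graph `Id_{A,C}` on a pair of dual formulas. -/
def idg : NForm α → NForm α → NGraph
  | .atom x _, .atom y _ => ⟨{x, y}, {s(x, y)}⟩
  | .or A1 A2, .and C1 C2 => (idg A1 C1).union (idg A2 C2)
  | .and A1 A2, .or C1 C2 => (idg A1 C1).union (idg A2 C2)
  | _, _ => ⟨∅, ∅⟩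

/-- The edgeless (weakening) graph on the names of `Γ`. -/
def wkg (Γ : Finset (NForm α)) : NGraph := ⟨snames Γ, ∅⟩

/-! ## Named GS4 derivations -/

/-- Named GS4 derivation trees. -/
inductive Deriv (α : Type) : Type
  | ax (Γ : Finset (NForm α)) (A C : NForm α)
  | cut (A : NForm α) (P Q : Deriv α)
  | sup (P Q : Deriv α)
  | orI (A B : NForm α) (P : Deriv α)
  | andI (A B : NForm α) (P Q : Deriv α)

/-- Conclusion of a derivation tree. -/
def concl : Deriv α → Finset (NForm α)
  | .ax Γ A C => insert A (insert C Γ)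
  | .cut A P _ => (concl P).erase A
  | .sup P _ => concl P
  | .orI A B P => insert (NForm.or A B) (((concl P).erase A).erase B)
  | .andI A B P _ => insert (NForm.and A B) ((concl P).erase A)

/-- Well-formedness of derivation trees w.r.t. the atom involution `bar`:
each rule is applied correctly to sharing-free named sequents. -/
def WF (bar : α → α) : Deriv α → Prop
  | .ax Γ A C =>
      A.shape = (negF bar C).shape ∧
      A.sharingFree ∧ C.sharingFree ∧ SFSet Γ ∧
      Disjoint A.names C.names ∧
      Disjoint A.names (snames Γ) ∧ Disjoint C.names (snames Γ)
  | .cut A P Q =>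
      WF bar P ∧ WF bar Q ∧
      ∃ Γ : Finset (NForm α), A ∉ Γ ∧ negF bar A ∉ Γ ∧
        concl P = insert A Γ ∧ concl Q = insert (negF bar A) Γ ∧
        A.sharingFree ∧ SFSet Γ ∧ Disjoint A.names (snames Γ)
  | .sup P Q => WF bar P ∧ WF bar Q ∧ concl P = concl Q
  | .orI A B P =>
      WF bar P ∧
      ∃ Γ : Finset (NForm α), A ∉ Γ ∧ B ∉ Γ ∧ A ≠ B ∧
        concl P = insert A (insert B Γ) ∧
        A.sharingFree ∧ B.sharingFree ∧ SFSet Γ ∧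
        Disjoint A.names B.names ∧
        Disjoint A.names (snames Γ) ∧ Disjoint B.names (snames Γ)
  | .andI A B P Q =>
      WF bar P ∧ WF bar Q ∧
      ∃ Γ : Finset (NForm α), A ∉ Γ ∧ B ∉ Γ ∧
        concl P = insert A Γ ∧ concl Q = insert B Γ ∧
        A.sharingFree ∧ B.sharingFree ∧ SFSet Γ ∧
        Disjoint A.names B.names ∧
        Disjoint A.names (snames Γ) ∧ Disjoint B.names (snames Γ)

/-- A derivation is cut-free if it contains no cut rule. -/
def CutFree : Deriv α → Prop
  | .ax _ _ _ => True
  | .cut _ _ _ => False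
  | .sup P Q => CutFree P ∧ CutFree Q
  | .orI _ _ P => CutFree P
  | .andI _ _ P Q => CutFree P ∧ CutFree Q

/-- The branch-labeled axiom graph `⟨⟨P⟩⟩` of a derivation. -/
def blaxg : Deriv α → BLGraph
  | .ax Γ A C => blwk (snames Γ) (BrS Γ) (blid A C)
  | .cut A P Q => BLGraph.comp (blaxg P) (blaxg Q) A.names
  | .sup P Q => (blaxg P).union (blaxg Q)
  | .orI _ _ P => blaxg P
  | .andI _ _ P Q => (blaxg P).union (blaxg Q)

/-- The (simple) axiom graph `⟦P⟧` of a derivation. -/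
def axg : Deriv α → NGraph
  | .ax Γ A C => (wkg Γ).union (idg A C)
  | .cut A P Q => NGraph.comp (axg P) (axg Q) A.names
  | .sup P Q => (axg P).union (axg Q)
  | .orI _ _ P => axg P
  | .andI _ _ P Q => (axg P).union (axg Q)

/-! ## Inversion and isolation -/

/-- Inversion of a disjunction `D ∨ E` in the conclusion. -/
def inv (D E : NForm α) : Deriv α → Deriv α
  | .ax Γ A C =>
      if A = NForm.or D E then
        match C with
        | .and C1 C2 =>
            .andI C1 C2 (.ax (insert E Γ) D C1) (.ax (insert D Γ) E C2)
        | _ => .ax Γ A C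
      else if C = NForm.or D E then
        match A with
        | .and A1 A2 =>
            .andI A1 A2 (.ax (insert E Γ) A1 D) (.ax (insert D Γ) A2 E)
        | _ => .ax Γ A C
      else
        .ax (insert D (insert E (Γ.erase (NForm.or D E)))) A C
  | .cut A P Q => .cut A (inv D E P) (inv D E Q)
  | .sup P Q => .sup (inv D E P) (inv D E Q)
  | .orI A B P => if A = D ∧ B = E then P else .orI A B (inv D E P)
  | .andI A B P Q => .andI A B (inv D E P) (inv D E Q)

/-- Left inversion of a conjunction `D ∧ E` in the conclusion. -/
def invl (D E : NForm α) : Deriv α → Deriv α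
  | .ax Γ A C =>
      if A = NForm.and D E then
        match C with
        | .or C1 C2 => .orI C1 C2 (.ax (insert C2 Γ) D C1)
        | _ => .ax Γ A C
      else if C = NForm.and D E then
        match A with
        | .or A1 A2 => .orI A1 A2 (.ax (insert A2 Γ) A1 D)
        | _ => .ax Γ A C
      else
        .ax (insert D (Γ.erase (NForm.and D E))) A C
  | .cut A P Q => .cut A (invl D E P) (invl D E Q)
  | .sup P Q => .sup (invl D E P) (invl D E Q)
  | .orI A B P => .orI A B (invl D E P)
  | .andI A B P Q => if A = D ∧ B = E then P else .andI A B (invl D E P) (invl D E Q)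

/-- Right inversion of a conjunction `D ∧ E` in the conclusion. -/
def invr (D E : NForm α) : Deriv α → Deriv α
  | .ax Γ A C =>
      if A = NForm.and D E then
        match C with
        | .or C1 C2 => .orI C1 C2 (.ax (insert C1 Γ) E C2)
        | _ => .ax Γ A C
      else if C = NForm.and D E then
        match A with
        | .or A1 A2 => .orI A1 A2 (.ax (insert A1 Γ) A2 E)
        | _ => .ax Γ A C
      else
        .ax (insert E (Γ.erase (NForm.and D E))) A C
  | .cut A P Q => .cut A (invr D E P) (invr D E Q)
  | .sup P Q => .sup (invr D E P) (invr D E Q)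
  | .orI A B P => .orI A B (invr D E P)
  | .andI A B P Q => if A = D ∧ B = E then Q else .andI A B (invr D E P) (invr D E Q)

/-- Isolation of a non-atomic formula in the conclusion. -/
def isl : NForm α → Deriv α → Deriv α
  | .or A B, P => .orI A B (inv A B P)
  | .and A B, P => .andI A B (invl A B P) (invr A B P)
  | .atom _ _, P => P

/-- Totality of a bl-graph w.r.t. a sharing-free named sequent. -/
def Total (bar : α → α) (G : BLGraph) (Γ : Finset (NForm α)) : Prop :=
  G.verts = snames Γ ∧
  G.Br = BrS Γ ∧
  ∀ x y : ℕ, s(x, y) ∈ G.Edges →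
    ∀ a b : α, HasAtomS Γ x a → HasAtomS Γ y b → a = bar b

end GS4

namespace GS4

variable {α : Type}

/-- The number of connectives of a named formula. -/
def NForm.connectives : NForm α → ℕ
  | .atom _ _ => 0
  | .or A B => A.connectives + B.connectives + 1
  | .and A B => A.connectives + B.connectives + 1

theorem NForm.names_nonempty (A : NForm α) : A.names.Nonempty := by
  induction A with
  | atom x a => exact ⟨x, rfl⟩
  | or A B ihA _ => exact ihA.mono Set.subset_union_left
  | and A B ihA _ => exact ihA.mono Set.subset_union_left

theorem subset_names_of_mem_BrF {A : NForm α} {X : Set ℕ} (h : X ∈ BrF A) : X ⊆ A.names := by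
  induction A generalizing X with
  | atom x a => exact Set.Subset.antisymm_iff.1 h |>.1
  | or A B ihA ihB =>
    obtain ⟨Y, hY, Z, hZ, rfl⟩ := h
    exact Set.union_subset_union (ihA hY) (ihB hZ)
  | and A B ihA ihB =>
    rcases h with h | h
    · exact (ihA h).trans Set.subset_union_left
    · exact (ihB h).trans Set.subset_union_right

theorem nonempty_of_mem_BrF {A : NForm α} {X : Set ℕ} (h : X ∈ BrF A) : X.Nonempty := by
  induction A generalizing X with
  | atom x a => exact ⟨x, by rw [Set.mem_singleton_iff.1 h]; rfl⟩
  | or A B ihA ihB =>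
    obtain ⟨Y, hY, Z, hZ, rfl⟩ := h
    exact (ihA hY).mono Set.subset_union_left
  | and A B ihA ihB =>
    rcases h with h | h
    · exact ihA h
    · exact ihB h

theorem inter_names_mem_BrF_or {A B : NForm α} (hd : Disjoint A.names B.names) (X : Set ℕ) :
    X ∩ (NForm.or A B).names ∈ BrF (NForm.or A B) ↔
      X ∩ A.names ∈ BrF A ∧ X ∩ B.names ∈ BrF B := by
  constructor
  · rintro ⟨Y, hY, Z, hZ, h⟩
    have hYs := subset_names_of_mem_BrF hY
    have hZs := subset_names_of_mem_BrF hZ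
    rw [Set.disjoint_left] at hd
    have hX : ∀ x, (x ∈ X ∧ (x ∈ A.names ∨ x ∈ B.names)) ↔ (x ∈ Y ∨ x ∈ Z) :=
      fun x => Set.ext_iff.1 h x
    have e1 : X ∩ A.names = Y := by
      ext x
      have := hX x; have := @hd x; have := @hYs x; have := @hZs x
      simp only [Set.mem_inter_iff]; tauto
    have e2 : X ∩ B.names = Z := by
      ext x
      have := hX x; have := @hd x; have := @hYs x; have := @hZs x
      simp only [Set.mem_inter_iff]; tauto
    exact ⟨e1 ▸ hY, e2 ▸ hZ⟩
  · rintro ⟨hA, hB⟩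
    exact ⟨_, hA, _, hB, Set.inter_union_distrib_left _ _ _⟩

theorem snames_insert (A : NForm α) (Γ : Finset (NForm α)) :
    snames (insert A Γ) = A.names ∪ snames Γ := by
  simp [snames]

theorem names_subset_snames {A : NForm α} {Γ : Finset (NForm α)} (h : A ∈ Γ) :
    A.names ⊆ snames Γ :=
  Set.subset_biUnion_of_mem (u := fun A : NForm α => A.names) h

theorem notMem_of_disjoint_snames {A : NForm α} {Γ : Finset (NForm α)}
    (hd : Disjoint A.names (snames Γ)) : A ∉ Γ := fun h =>
  A.names_nonempty.ne_empty (disjoint_self.1 (hd.mono_right (names_subset_snames h)))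

theorem SFSet.of_insert {A : NForm α} {Γ : Finset (NForm α)} (hA : A ∉ Γ)
    (h : SFSet (insert A Γ)) : A.sharingFree ∧ SFSet Γ ∧ Disjoint A.names (snames Γ) := by
  refine ⟨h.1 _ (Finset.mem_insert_self _ _),
    ⟨fun B hB => h.1 _ (Finset.mem_insert_of_mem hB), fun B hB C hC =>
      h.2 _ (Finset.mem_insert_of_mem hB) _ (Finset.mem_insert_of_mem hC)⟩, ?_⟩
  simp only [snames, Set.disjoint_iUnion_right]
  intro B hB
  exact h.2 _ (Finset.mem_insert_self _ _) _ (Finset.mem_insert_of_mem hB)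
    (fun e => hA (e ▸ hB))

theorem SFSet.insert {A : NForm α} {Γ : Finset (NForm α)} (hA : A.sharingFree) (hΓ : SFSet Γ)
    (hd : Disjoint A.names (snames Γ)) : SFSet (insert A Γ) := by
  constructor
  · intro B hB
    rcases Finset.mem_insert.1 hB with rfl | hB
    · exact hA
    · exact hΓ.1 _ hB
  · intro B hB C hC hne
    rcases Finset.mem_insert.1 hB with rfl | hBΓ <;>
      rcases Finset.mem_insert.1 hC with rfl | hCΓ
    · exact absurd rfl hne
    · exact hd.mono_right (names_subset_snames hCΓ)
    · exact (hd.mono_right (names_subset_snames hBΓ)).symm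
    · exact hΓ.2 _ hBΓ _ hCΓ hne

theorem HasAtomS.of_insert {A F : NForm α} {Γ : Finset (NForm α)} {x : ℕ} {a : α}
    (hAF : HasAtom A x a → HasAtom F x a) (h : HasAtomS (insert A Γ) x a) :
    HasAtomS (insert F Γ) x a := by
  obtain ⟨B, hB, hx⟩ := h
  rcases Finset.mem_insert.1 hB with rfl | hB
  · exact ⟨F, Finset.mem_insert_self _ _, hAF hx⟩
  · exact ⟨B, Finset.mem_insert_of_mem hB, hx⟩

theorem mem_BrS_insert {A : NForm α} {Γ : Finset (NForm α)} {X : Set ℕ} :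
    X ∈ BrS (insert A Γ) ↔
      X ⊆ A.names ∪ snames Γ ∧ X ∩ A.names ∈ BrF A ∧ ∀ B ∈ Γ, X ∩ B.names ∈ BrF B := by
  simp [BrS, snames_insert]

theorem BrS_insert_or {A B : NForm α} (hd : Disjoint A.names B.names) (Γ : Finset (NForm α)) :
    BrS (insert (NForm.or A B) Γ) = BrS (insert A (insert B Γ)) := by
  ext X
  rw [mem_BrS_insert, mem_BrS_insert, inter_names_mem_BrF_or hd, snames_insert,
    Finset.forall_mem_insert, NForm.names, Set.union_assoc, and_assoc]

theorem mem_BrS_insert_of_and_left {A B : NForm α} {Γ : Finset (NForm α)} {X : Set ℕ}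
    (hAB : Disjoint A.names B.names) (hB : Disjoint B.names (snames Γ))
    (hX : X ∈ BrS (insert (NForm.and A B) Γ)) (hs : X ⊆ snames (insert A Γ)) :
    X ∈ BrS (insert A Γ) := by
  rw [mem_BrS_insert] at hX ⊢
  rw [snames_insert] at hs
  have hXB : X ∩ B.names = ∅ :=
    ((Set.disjoint_union_left.2 ⟨hAB, hB.symm⟩).mono_left hs).inter_eq
  have e : X ∩ (NForm.and A B).names = X ∩ A.names := by
    rw [NForm.names, Set.inter_union_distrib_left, hXB, Set.union_empty]
  refine ⟨hs, ?_, hX.2.2⟩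
  have h := hX.2.1
  rw [e] at h
  rcases h with h | h
  · exact h
  · obtain ⟨x, hx⟩ := nonempty_of_mem_BrF h
    exact absurd (subset_names_of_mem_BrF h hx) (Set.disjoint_left.1 hAB hx.2)

theorem mem_BrS_insert_and_of_left {A B : NForm α} {Γ : Finset (NForm α)} {X : Set ℕ}
    (hAB : Disjoint A.names B.names) (hB : Disjoint B.names (snames Γ))
    (hX : X ∈ BrS (insert A Γ)) : X ∈ BrS (insert (NForm.and A B) Γ) := by
  rw [mem_BrS_insert] at hX ⊢
  have hXB : X ∩ B.names = ∅ :=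
    ((Set.disjoint_union_left.2 ⟨hAB, hB.symm⟩).mono_left hX.1).inter_eq
  refine ⟨hX.1.trans (Set.union_subset_union_left _ Set.subset_union_left), ?_, hX.2.2⟩
  rw [NForm.names, Set.inter_union_distrib_left, hXB, Set.union_empty]
  exact Or.inl hX.2.1

theorem BrS_insert_and_comm (A B : NForm α) (Γ : Finset (NForm α)) :
    BrS (insert (NForm.and A B) Γ) = BrS (insert (NForm.and B A) Γ) := by
  ext X
  simp only [mem_BrS_insert, NForm.names, BrF, Set.union_comm]

theorem subset_snames_of_mem_BrS_and {A B : NForm α} {Γ : Finset (NForm α)} {X : Set ℕ}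
    (hX : X ∈ BrS (insert (NForm.and A B) Γ)) :
    X ⊆ snames (insert A Γ) ∨ X ⊆ snames (insert B Γ) := by
  rw [mem_BrS_insert] at hX
  simp only [snames_insert]
  rcases hX.2.1 with h | h
  · refine Or.inl fun x hx => ?_
    rcases hX.1 hx with h' | h'
    · exact Or.inl (subset_names_of_mem_BrF h ⟨hx, h'⟩)
    · exact Or.inr h'
  · refine Or.inr fun x hx => ?_
    rcases hX.1 hx with h' | h'
    · exact Or.inl (subset_names_of_mem_BrF h ⟨hx, h'⟩)
    · exact Or.inr h'

theorem BLGraph.IsBL.restrict {G : BLGraph} (hG : G.IsBL) (S : Set ℕ) : (G.restrict S).IsBL :=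
  fun e X h => ⟨(hG e X h.1).1, Set.subset_inter (hG e X h.1).2.1 h.2, (hG e X h.1).2.2⟩

/-- Restricting a total graph to one conjunct of a conjunction of the sequent keeps it total. -/
theorem Total.restrict_of_and {bar : α → α} {G : BLGraph} {F A B : NForm α}
    {Γ : Finset (NForm α)} (hAB : Disjoint A.names B.names) (hB : Disjoint B.names (snames Γ))
    (hBr : BrS (insert F Γ) = BrS (insert (NForm.and A B) Γ)) (hF : A.names ⊆ F.names)
    (hatom : ∀ x a, HasAtom A x a → HasAtom F x a) (h : Total bar G (insert F Γ)) :
    Total bar (G.restrict (snames (insert A Γ))) (insert A Γ) := by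
  obtain ⟨hv, hb, he⟩ := h
  refine ⟨?_, ?_, ?_⟩
  · rw [BLGraph.restrict, hv, snames_insert, snames_insert]
    exact Set.inter_eq_right.2 (Set.union_subset_union_left _ hF)
  · ext X
    constructor
    · rintro ⟨e, h, hs⟩
      have hX : X ∈ G.Br := ⟨e, h⟩
      rw [hb, hBr] at hX
      exact mem_BrS_insert_of_and_left hAB hB hX hs
    · intro hX
      have h : X ∈ G.Br := by
        rw [hb, hBr]
        exact mem_BrS_insert_and_of_left hAB hB hX
      obtain ⟨e, h⟩ := h
      exact ⟨e, h, hX.1⟩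
  · rintro x y ⟨X, h, -⟩ a b ha hb
    exact he x y ⟨X, h⟩ a b (ha.of_insert (hatom _ _)) (hb.of_insert (hatom _ _))

theorem BrS_eq_of_forall_atom {Γ : Finset (NForm α)} (hΓ : ∀ A ∈ Γ, ∃ x a, A = NForm.atom x a) :
    BrS Γ = {snames Γ} := by
  ext X
  simp only [Set.mem_singleton_iff]
  constructor
  · rintro ⟨hs, h⟩
    refine hs.antisymm fun x hx => ?_
    simp only [snames, Set.mem_iUnion] at hx
    obtain ⟨A, hA, hx⟩ := hx
    obtain ⟨y, a, rfl⟩ := hΓ _ hA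
    have := h _ hA
    rw [BrF, Set.mem_singleton_iff] at this
    have hx' : x ∈ X ∩ (NForm.atom y a).names := by rw [this]; exact hx
    exact hx'.1
  · rintro rfl
    refine ⟨subset_rfl, fun A hA => ?_⟩
    rw [Set.inter_eq_right.2 (names_subset_snames hA)]
    obtain ⟨y, a, rfl⟩ := hΓ _ hA
    rfl

theorem NForm.finite_names (A : NForm α) : A.names.Finite := by
  induction A with
  | atom x a => exact Set.finite_singleton x
  | or A B ihA ihB => exact ihA.union ihB
  | and A B ihA ihB => exact ihA.union ihB

theorem finite_snames (Γ : Finset (NForm α)) : (snames Γ).Finite :=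
  Γ.finite_toSet.biUnion fun A _ => A.finite_names

/-- A single edge of an atomic sequent is the axiom graph of an axiom. -/
theorem exists_axiom_of_edge {bar : α → α} {Γ : Finset (NForm α)} (hΓ : SFSet Γ)
    (hat : ∀ A ∈ Γ, ∃ x a, A = NForm.atom x a) {x y : ℕ} (hxy : x ≠ y) {a b : α}
    (hx : NForm.atom x a ∈ Γ) (hy : NForm.atom y b ∈ Γ) (hab : a = bar b) :
    ∃ P : Deriv α, WF bar P ∧ concl P = Γ ∧
      blaxg P = ⟨snames Γ, fun e X => e = s(x, y) ∧ X = snames Γ⟩ := by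
  have hy' : NForm.atom y b ∈ Γ.erase (NForm.atom x a) :=
    Finset.mem_erase.2 ⟨fun h => hxy (NForm.atom.inj h).1.symm, hy⟩
  set Δ := (Γ.erase (NForm.atom x a)).erase (NForm.atom y b) with hΔ
  have hc : insert (NForm.atom x a) (insert (NForm.atom y b) Δ) = Γ := by
    rw [hΔ, Finset.insert_erase hy', Finset.insert_erase hx]
  have hyΔ : NForm.atom y b ∉ Δ := Finset.notMem_erase _ _
  have hxΔ : NForm.atom x a ∉ insert (NForm.atom y b) Δ := by
    rw [hΔ, Finset.insert_erase hy']
    exact Finset.notMem_erase _ _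
  have hatΔ : ∀ A ∈ Δ, ∃ x a, A = NForm.atom x a := fun A hA =>
    hat A (Finset.mem_of_mem_erase (Finset.mem_of_mem_erase hA))
  rw [← hc] at hΓ
  obtain ⟨-, h1, h2⟩ := hΓ.of_insert hxΔ
  obtain ⟨-, h3, h4⟩ := h1.of_insert hyΔ
  rw [snames_insert, Set.disjoint_union_right] at h2
  refine ⟨.ax Δ (.atom x a) (.atom y b), ⟨by rw [hab]; rfl, trivial, trivial, h3, h2.1, h2.2, h4⟩,
    hc, ?_⟩
  have hs : snames Γ = {x, y} ∪ snames Δ := by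
    rw [← hc, snames_insert, snames_insert, ← Set.union_assoc]
    rfl
  rw [hs]
  simp only [blaxg, blwk, blid, BrS_eq_of_forall_atom hatΔ, BLGraph.mk.injEq, true_and]
  funext e X
  simp only [Set.mem_singleton_iff, eq_iff_iff]
  constructor
  · rintro ⟨Y, Z, ⟨rfl, rfl⟩, rfl, rfl⟩
    exact ⟨rfl, rfl⟩
  · rintro ⟨rfl, rfl⟩
    exact ⟨_, _, ⟨rfl, rfl⟩, rfl, rfl⟩

/-- A finite nonempty set of edges of an atomic sequent is realised by superposing axioms. -/
theorem exists_deriv_of_edges {bar : α → α} {Γ : Finset (NForm α)} {E : Set (Sym2 ℕ)}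
    (hfin : E.Finite) (hne : E.Nonempty)
    (hE : ∀ e ∈ E, ∃ P : Deriv α, WF bar P ∧ concl P = Γ ∧
      blaxg P = ⟨snames Γ, fun e' X => e' = e ∧ X = snames Γ⟩) :
    ∃ P : Deriv α, WF bar P ∧ concl P = Γ ∧
      blaxg P = ⟨snames Γ, fun e X => e ∈ E ∧ X = snames Γ⟩ := by
  induction E, hfin using Set.Finite.induction_on with
  | empty => exact absurd hne Set.not_nonempty_empty
  | @insert e E _ _ ih =>
    obtain ⟨P, hP, hPc, hPg⟩ := hE e (Set.mem_insert _ _)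
    rcases E.eq_empty_or_nonempty with rfl | hne'
    · exact ⟨P, hP, hPc, by simpa using hPg⟩
    · obtain ⟨Q, hQ, hQc, hQg⟩ := ih hne' fun e' h => hE e' (Set.mem_insert_of_mem _ h)
      refine ⟨.sup P Q, ⟨hP, hQ, hPc.trans hQc.symm⟩, hPc, ?_⟩
      simp only [blaxg, hPg, hQg, BLGraph.union, Set.union_self, Set.mem_insert_iff, or_and_right]

theorem sequentialization_of_forall_atom {bar : α → α} {Γ : Finset (NForm α)} (hΓ : SFSet Γ)
    (hat : ∀ A ∈ Γ, ∃ x a, A = NForm.atom x a) {G : BLGraph} (hG : G.IsBL)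
    (htot : Total bar G Γ) : ∃ P : Deriv α, WF bar P ∧ concl P = Γ ∧ blaxg P = G := by
  obtain ⟨hv, hb, he⟩ := htot
  rw [BrS_eq_of_forall_atom hat] at hb
  have hlabel : ∀ e X, G.rel e X → X = snames Γ := fun e X h => by
    have : X ∈ G.Br := ⟨e, h⟩
    rwa [hb] at this
  have hmem : ∀ x ∈ snames Γ, ∃ a, NForm.atom x a ∈ Γ := fun x hx => by
    simp only [snames, Set.mem_iUnion] at hx
    obtain ⟨A, hA, hx⟩ := hx
    obtain ⟨y, a, rfl⟩ := hat A hA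
    obtain rfl : x = y := hx
    exact ⟨a, hA⟩
  have hfin : G.Edges.Finite := by
    refine (((finite_snames Γ).prod (finite_snames Γ)).image fun p => s(p.1, p.2)).subset ?_
    intro e
    induction e using Sym2.ind with
    | _ x y =>
      rintro ⟨X, h⟩
      obtain ⟨-, hX, hxy⟩ := hG _ _ h
      rw [hv] at hX
      exact ⟨(x, y), ⟨hX (hxy _ (Sym2.mem_mk_left _ _)), hX (hxy _ (Sym2.mem_mk_right _ _))⟩, rfl⟩
  have hne : G.Edges.Nonempty := by
    have : snames Γ ∈ G.Br := by rw [hb]; rfl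
    obtain ⟨e, h⟩ := this
    exact ⟨e, _, h⟩
  obtain ⟨P, hP, hPc, hPg⟩ := exists_deriv_of_edges (bar := bar) (Γ := Γ) hfin hne (by
    intro e
    induction e using Sym2.ind with
    | _ x y =>
      intro hxyE
      obtain ⟨X, h⟩ := hxyE
      obtain ⟨hdiag, hX, hxy⟩ := hG _ _ h
      rw [hv] at hX
      obtain ⟨a, ha⟩ := hmem x (hX (hxy _ (Sym2.mem_mk_left _ _)))
      obtain ⟨b, hb⟩ := hmem y (hX (hxy _ (Sym2.mem_mk_right _ _)))
      exact exists_axiom_of_edge hΓ hat (fun e => hdiag (Sym2.mk_isDiag_iff.2 e)) ha hb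
        (he x y ⟨X, h⟩ a b ⟨_, ha, rfl, rfl⟩ ⟨_, hb, rfl, rfl⟩))
  refine ⟨P, hP, hPc, hPg.trans ?_⟩
  obtain ⟨V, r⟩ := G
  obtain rfl : V = snames Γ := hv
  congr 1
  funext e X
  rw [eq_iff_iff]
  constructor
  · rintro ⟨⟨Y, h⟩, rfl⟩
    rwa [← hlabel e Y h]
  · exact fun h => ⟨⟨X, h⟩, hlabel e X h⟩

theorem BLGraph.restrict_union_restrict {G : BLGraph} {S T : Set ℕ} (hv : G.verts = S ∪ T)
    (hb : ∀ X ∈ G.Br, X ⊆ S ∨ X ⊆ T) : (G.restrict S).union (G.restrict T) = G := by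
  obtain ⟨V, r⟩ := G
  simp only [BLGraph.restrict, BLGraph.union, BLGraph.mk.injEq]
  constructor
  · rw [← Set.inter_union_distrib_left, ← hv, Set.inter_self]
  · funext e X
    rw [eq_iff_iff, ← and_or_left]
    exact ⟨And.left, fun h => ⟨h, hb X ⟨e, h⟩⟩⟩

theorem exists_deriv_of_total {bar : α → α} (n : ℕ) :
    ∀ (Γ : Finset (NForm α)), ∑ A ∈ Γ, A.connectives = n → SFSet Γ → ∀ G : BLGraph, G.IsBL →
      Total bar G Γ → ∃ P : Deriv α, WF bar P ∧ concl P = Γ ∧ blaxg P = G := by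
  induction n using Nat.strong_induction_on with
  | _ n ih =>
  intro Γ hn hΓ G hG htot
  by_cases hat : ∀ A ∈ Γ, ∃ x a, A = NForm.atom x a
  · exact sequentialization_of_forall_atom hΓ hat hG htot
  push Not at hat
  obtain ⟨F, hF, hFat⟩ := hat
  obtain ⟨Δ, hFΔ, rfl⟩ : ∃ Δ, F ∉ Δ ∧ insert F Δ = Γ :=
    ⟨Γ.erase F, Finset.notMem_erase _ _, Finset.insert_erase hF⟩
  obtain ⟨hFsf, hΔ, hFd⟩ := hΓ.of_insert hFΔ
  rw [Finset.sum_insert hFΔ] at hn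
  cases F with
  | atom x a => exact absurd rfl (hFat x a)
  | or A B =>
    obtain ⟨hA, hB, hAB⟩ := hFsf
    obtain ⟨hAd, hBd⟩ := Set.disjoint_union_left.1 hFd
    have hABd : Disjoint A.names (snames (insert B Δ)) := by
      rw [snames_insert]
      exact Set.disjoint_union_right.2 ⟨hAB, hAd⟩
    have hBΔ := notMem_of_disjoint_snames hBd
    have hABΔ := notMem_of_disjoint_snames hABd
    obtain ⟨P, hP, hPc, hPg⟩ := ih (A.connectives + (B.connectives + ∑ C ∈ Δ, C.connectives))
      (by simp only [NForm.connectives] at hn; omega) (insert A (insert B Δ))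
      (by rw [Finset.sum_insert hABΔ, Finset.sum_insert hBΔ])
      (.insert hA (.insert hB hΔ hBd) hABd) G hG (by
        obtain ⟨hv, hb, he⟩ := htot
        have hlift : ∀ x a, HasAtomS (insert A (insert B Δ)) x a →
            HasAtomS (insert (NForm.or A B) Δ) x a := fun x a h => by
          have := (h.of_insert (F := NForm.or A B) Or.inl)
          rw [Finset.insert_comm] at this
          have := this.of_insert (F := NForm.or A B) Or.inr
          rwa [Finset.insert_idem] at this
        refine ⟨?_, hb.trans (BrS_insert_or hAB Δ), fun x y hxy a b ha hb =>
          he x y hxy a b (hlift _ _ ha) (hlift _ _ hb)⟩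
        rw [hv, snames_insert, snames_insert, snames_insert, NForm.names, Set.union_assoc])
    have hA' : A ∉ Δ := fun h => hABΔ (Finset.mem_insert_of_mem h)
    have hne : A ≠ B := fun h => hABΔ (h ▸ Finset.mem_insert_self _ _)
    refine ⟨.orI A B P, ⟨hP, Δ, hA', hBΔ, hne, hPc, hA, hB, hΔ, hAB, hAd, hBd⟩, ?_, hPg⟩
    rw [concl, hPc, Finset.erase_insert hABΔ, Finset.erase_insert hBΔ]
  | and A B =>
    obtain ⟨hA, hB, hAB⟩ := hFsf
    obtain ⟨hAd, hBd⟩ := Set.disjoint_union_left.1 hFd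
    have hAΔ := notMem_of_disjoint_snames hAd
    have hBΔ := notMem_of_disjoint_snames hBd
    simp only [NForm.connectives] at hn
    obtain ⟨P, hP, hPc, hPg⟩ := ih (A.connectives + ∑ C ∈ Δ, C.connectives) (by omega)
      (insert A Δ) (by rw [Finset.sum_insert hAΔ]) (.insert hA hΔ hAd) _ (hG.restrict _)
      (htot.restrict_of_and hAB hBd rfl Set.subset_union_left fun _ _ => Or.inl)
    obtain ⟨Q, hQ, hQc, hQg⟩ := ih (B.connectives + ∑ C ∈ Δ, C.connectives) (by omega)
      (insert B Δ) (by rw [Finset.sum_insert hBΔ]) (.insert hB hΔ hBd) _ (hG.restrict _)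
      (htot.restrict_of_and hAB.symm hAd (BrS_insert_and_comm A B Δ) Set.subset_union_right
        fun _ _ => Or.inr)
    refine ⟨.andI A B P Q, ⟨hP, hQ, Δ, hAΔ, hBΔ, hPc, hQc, hA, hB, hΔ, hAB, hAd, hBd⟩, ?_, ?_⟩
    · rw [concl, hPc, Finset.erase_insert hAΔ]
    · rw [blaxg, hPg, hQg]
      refine BLGraph.restrict_union_restrict ?_ fun X hX => ?_
      · rw [htot.1, snames_insert, snames_insert, snames_insert, NForm.names,
          ← Set.union_union_distrib_right]
      · rw [htot.2.1] at hX
        exact subset_snames_of_mem_BrS_and hX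

end GS4

/-- Sequentialization: every bl-graph total w.r.t. a sharing-free
named sequent is the branch-labeled axiom graph of some derivation of it. -/
theorem GS4.sequentialization {α : Type} (bar : α → α)
    (hbar : Function.Involutive bar) (hfix : ∀ a, bar a ≠ a)
    (Γ : Finset (GS4.NForm α)) (hΓ : GS4.SFSet Γ)
    (G : GS4.BLGraph) (hG : G.IsBL) (htot : GS4.Total bar G Γ) :
    ∃ P : GS4.Deriv α, GS4.WF bar P ∧ GS4.concl P = Γ ∧ GS4.blaxg P = G := by
  exact GS4.exists_deriv_of_total _ Γ rfl hΓ G hG htot
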